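/- Let p₁₀, p₀₁ and p₆₀, p₅₁, p₄₂, p₃₃, p₂₄, p₁₅, p₀₆ be real numbers with p₁₀² + p₀₁² ≠ 0, and set P₁(θ) = p₁₀ cos θ + p₀₁ sin θ and P₆(θ) = Σ_{i+j=6} p_{ij} cosⁱθ sinʲθ. Then the equation dr/dθ = r(P₁(θ) r + P₆(θ) r⁶) has a center at r = 0 if and only if the following four conditions hold: 5(p₆₀ + p₀₆) + p₄₂ + p₂₄ = 0; p₁₀²(p₂₄ − 5p₆₀ + 10p₀₆) − p₁₀p₀₁(5p₅₁ + 5p₁₅ + 3p₃₃) + p₀₁²(p₄₂ − 5p₀₆ + 10p₆₀) = 0; p₁₀⁴(p₂₄ − 3p₆₀ + 12p₀₆) − p₁₀³p₀₁(3p₅₁ + 7p₁₅ + 3p₃₃) − 12p₁₀²p₀₁²(p₆₀ + p₀₆) − p₁₀p₀₁³(3p₁₅ + 7p₅₁ + 3p₃₃) + p₀₁⁴(p₄₂ − 3p₀₆ + 12p₆₀) = 0; and p₆₀p₀₁⁶ − p₅₁p₀₁⁵p₁₀ + p₄₂p₀₁⁴p₁₀² − p₃₃p₀₁³p₁₀³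 + p₂₄p₀₁²p₁₀⁴ − p₁₅p₀₁p₁₀⁵ + p₀₆p₁₀⁶ = 0. -/

import Mathlib

open Real

/-- A 2π-periodic scalar ODE `dr/dθ = F θ r` has a center at `r = 0` if every solution
with `|r 0|` sufficiently small is defined on `[0, 2π]` and satisfies `r (2π) = r 0`. -/
def HasCenterAtZero (F : ℝ → ℝ → ℝ) : Prop :=
  ∃ ε > (0 : ℝ), ∀ r : ℝ → ℝ, |r 0| < ε →
    (∀ θ ∈ Set.Icc (0 : ℝ) (2 * Real.pi), HasDerivAt r (F θ (r θ)) θ) →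
    r (2 * Real.pi) = r 0

/-!
Let `A' = P` with `A (0) = A (2 π) = 0`. For a solution `r ≠ 0` of `r' = r (P r + Q rⁿ)`, the
function `v = 1 / r + A` satisfies `v' = -Q rⁿ⁻¹`, hence `-v' vⁿ⁻¹ = Q (1 + A r)ⁿ⁻¹`, and this has
integral zero if `r` is `2 π`-periodic. Since `1 + A r = (1 - c A)⁻¹ + O(cⁿ⁺¹)` with `c = r (0)`,
comparing powers of `c` shows that a center forces the moment conditions `∫ Q Aᵏ = 0` for `k ≤ n`.

If moreover `Q = E(S) + S' G(S)`, where `S' = P` and `E`, `G` are polynomials with `deg E ≤ n`, the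
moment conditions give `∫ E(S)² = 0`, so `E = 0`. Conversely, if `E = 0`, then the solutions near
zero have the form `R(S)`, where `R` solves `dR/ds = R (R + G(s) Rⁿ)`, so they are periodic. For
`P = a cos θ + b sin θ` the functions `S`, `S'` are orthogonal coordinates of the plane, and a
homogeneous polynomial `Q` on the circle `S² + S'² = a² + b²` reduces to degree one in `S'`.
-/

open Set Filter Asymptotics Metric MeasureTheory Topology Polynomial
open scoped NNReal

section ODE

variable {E : Type*} [NormedAddCommGroup E] {F : ℝ → E → E} {a b t₀ : ℝ} {α β : ℝ → E}

/-- The time-dependent vector field `F` is Lipschitz on every ball around the origin, with a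
constant that does not depend on the time `t ∈ I`. -/
def LipschitzOnBalls (F : ℝ → E → E) (I : Set ℝ) : Prop :=
  ∀ R : ℝ, ∃ K : ℝ≥0, ∀ t ∈ I, LipschitzOnWith K (F t) (closedBall 0 R)

theorem lipschitzOnBalls_of_hasDerivAt {F F' : ℝ → ℝ → ℝ} {I : Set ℝ} (hI : IsCompact I)
    (hF : ∀ t x, HasDerivAt (F t) (F' t x) x) (hF' : Continuous fun p : ℝ × ℝ ↦ F' p.1 p.2) :
    LipschitzOnBalls F I := by
  intro R
  obtain ⟨C, hC⟩ := (hI.prod (isCompact_closedBall (0 : ℝ) R)).exists_bound_of_continuousOn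
    hF'.continuousOn
  refine ⟨C.toNNReal, fun t ht ↦ (convex_closedBall 0 R).lipschitzOnWith_of_nnnorm_hasDerivWithin_le
    (fun x _ ↦ (hF t x).hasDerivWithinAt) fun x hx ↦ ?_⟩
  exact NNReal.coe_le_coe.1 ((hC (t, x) ⟨ht, hx⟩).trans (le_coe_toNNReal C))

/-- A field that is continuous in time, Lipschitz on balls around the origin, and small compared to
the position near the origin, all uniformly in the time `t ∈ I`: a time-dependent field with a rest
point at the origin at which its linear part vanishes. -/
structure IsSuperlinearField (F : ℝ → E → E) (I : Set ℝ) : Prop where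
  continuousOn : ∀ x, ContinuousOn (F · x) I
  lipschitzOnBalls : LipschitzOnBalls F I
  isLittleO : (fun p : ℝ × E ↦ F p.1 p.2) =o[𝓟 I ×ˢ 𝓝 0] Prod.snd

theorem IsSuperlinearField.zero {I : Set ℝ} (hF : IsSuperlinearField F I) {t : ℝ} (ht : t ∈ I) :
    F t 0 = 0 := by
  obtain ⟨s, hs, u, hu, hsu⟩ := mem_prod_iff.1 (hF.isLittleO.bound one_pos)
  simpa using hsu (mk_mem_prod (hs ht) (mem_of_mem_nhds hu))

-- Choosing `δ` with `δ * max (b - t₀) (t₀ - a) ≤ 1 / 2`, solutions starting in the ball of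
-- radius `A / 2` do not leave the ball of radius `A`, on which `‖F t x‖ ≤ δ * A`.
theorem IsSuperlinearField.exists_isPicardLindelof (hF : IsSuperlinearField F (Icc a b))
    (t₀ : Icc a b) : ∃ A r L K : ℝ≥0, 0 < r ∧ IsPicardLindelof F t₀ 0 A r L K := by
  set T : ℝ := max (b - t₀) (t₀ - a)
  have hT : 0 ≤ T := le_max_of_le_left (sub_nonneg.2 t₀.2.2)
  set δ : ℝ≥0 := ⟨(2 * (T + 1))⁻¹, by positivity⟩
  have hδ : (0 : ℝ) < δ := by change 0 < (2 * (T + 1))⁻¹; positivity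
  obtain ⟨s, hs, u, hu, hsu⟩ := mem_prod_iff.1 (hF.isLittleO.bound hδ)
  obtain ⟨A, hA, hAu⟩ := nhds_basis_closedBall.mem_iff.1 hu
  lift A to ℝ≥0 using hA.le
  obtain ⟨K, hK⟩ := hF.lipschitzOnBalls A
  refine ⟨A, A / 2, δ * A, K, half_pos hA, hK, fun x _ ↦ hF.continuousOn x, fun t ht x hx ↦ ?_, ?_⟩
  · have hbound : ‖F t x‖ ≤ δ * ‖x‖ := hsu (mk_mem_prod (hs ht) (hAu hx))
    exact hbound.trans (by push_cast; gcongr; exact mem_closedBall_zero_iff.1 hx)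
  · have hδT : δ * T ≤ 1 / 2 := by
      change (2 * (T + 1))⁻¹ * T ≤ 1 / 2
      rw [inv_mul_le_iff₀ (by positivity)]
      linarith
    push_cast
    nlinarith [A.coe_nonneg]

variable [NormedSpace ℝ E]

theorem eqOn_Icc_of_isIntegralCurveOn (hF : LipschitzOnBalls F (Icc a b))
    (hα : IsIntegralCurveOn α F (Icc a b)) (hβ : IsIntegralCurveOn β F (Icc a b))
    (ht₀ : t₀ ∈ Icc a b) (h : α t₀ = β t₀) : EqOn α β (Icc a b) := by
  obtain ⟨A, hA⟩ := isCompact_Icc.exists_bound_of_continuousOn hα.continuousOn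
  obtain ⟨B, hB⟩ := isCompact_Icc.exists_bound_of_continuousOn hβ.continuousOn
  obtain ⟨K, hK⟩ := hF (max A B)
  have hαR : ∀ t ∈ Icc a b, α t ∈ closedBall 0 (max A B) := fun t ht ↦
    mem_closedBall_zero_iff.2 ((hA t ht).trans (le_max_left A B))
  have hβR : ∀ t ∈ Icc a b, β t ∈ closedBall 0 (max A B) := fun t ht ↦
    mem_closedBall_zero_iff.2 ((hB t ht).trans (le_max_right A B))
  have left : Icc a t₀ ⊆ Icc a b := Icc_subset_Icc_right ht₀.2
  have left' : Ioc a t₀ ⊆ Icc a b := Ioc_subset_Icc_self.trans left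
  have right : Icc t₀ b ⊆ Icc a b := Icc_subset_Icc_left ht₀.1
  have right' : Ico t₀ b ⊆ Icc a b := Ico_subset_Icc_self.trans right
  have mem_Iic : ∀ t ∈ Ioc a t₀, Icc a b ∈ 𝓝[≤] t := fun t ht ↦
    Icc_mem_nhdsLE_of_mem ⟨ht.1, ht.2.trans ht₀.2⟩
  have mem_Ici : ∀ t ∈ Ico t₀ b, Icc a b ∈ 𝓝[≥] t := fun t ht ↦
    Icc_mem_nhdsGE_of_mem ⟨ht₀.1.trans ht.1, ht.2⟩
  rw [← Icc_union_Icc_eq_Icc ht₀.1 ht₀.2]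
  refine EqOn.union ?_ ?_
  · exact ODE_solution_unique_of_mem_Icc_left (fun t ht ↦ hK t (left' ht))
      (hα.continuousOn.mono left)
      (fun t ht ↦ (hα t (left' ht)).mono_of_mem_nhdsWithin (mem_Iic t ht))
      (fun t ht ↦ hαR t (left' ht)) (hβ.continuousOn.mono left)
      (fun t ht ↦ (hβ t (left' ht)).mono_of_mem_nhdsWithin (mem_Iic t ht))
      (fun t ht ↦ hβR t (left' ht)) h
  · exact ODE_solution_unique_of_mem_Icc_right (fun t ht ↦ hK t (right' ht))
      (hα.continuousOn.mono right)
      (fun t ht ↦ (hα t (right' ht)).mono_of_mem_nhdsWithin (mem_Ici t ht))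
      (fun t ht ↦ hαR t (right' ht)) (hβ.continuousOn.mono right)
      (fun t ht ↦ (hβ t (right' ht)).mono_of_mem_nhdsWithin (mem_Ici t ht))
      (fun t ht ↦ hβR t (right' ht)) h

theorem IsSuperlinearField.isIntegralCurveOn_zero {I : Set ℝ} (hF : IsSuperlinearField F I) :
    IsIntegralCurveOn (fun _ ↦ (0 : E)) F I := fun t ht ↦ by
  rw [hF.zero ht]
  exact hasDerivWithinAt_const t I 0

theorem IsSuperlinearField.exists_flow [CompleteSpace E] (hF : IsSuperlinearField F (Icc a b))
    (ht₀ : t₀ ∈ Icc a b) :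
    ∃ φ : E → ℝ → E, (∀ᶠ x in 𝓝 0, φ x t₀ = x ∧ IsIntegralCurveOn (φ x) F (Icc a b)) ∧
      (fun p : E × ℝ ↦ φ p.1 p.2) =O[𝓝 0 ×ˢ 𝓟 (Icc a b)] Prod.fst := by
  obtain ⟨A, r, L, K, hr, hPL⟩ := hF.exists_isPicardLindelof ⟨t₀, ht₀⟩
  obtain ⟨φ, hφ, C, hC⟩ :=
    hPL.exists_forall_mem_closedBall_eq_hasDerivWithinAt_lipschitzOnWith
  have h0 : (0 : E) ∈ closedBall 0 (r : ℝ) := mem_closedBall_self r.coe_nonneg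
  have hφ0 : EqOn (φ 0) (fun _ ↦ 0) (Icc a b) :=
    eqOn_Icc_of_isIntegralCurveOn hF.lipschitzOnBalls (hφ 0 h0).2 hF.isIntegralCurveOn_zero ht₀
      (hφ 0 h0).1
  have hball : closedBall (0 : E) r ∈ 𝓝 0 := closedBall_mem_nhds 0 (NNReal.coe_pos.2 hr)
  refine ⟨φ, eventually_of_mem hball hφ, .of_bound C ?_⟩
  filter_upwards [prod_mem_prod hball (mem_principal_self _)] with p hp
  simpa [hφ0 hp.2] using (hC p.2 hp.2).norm_sub_le hp.1 h0

end ODE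

/-- The right-hand side of the equation `dr/dθ = r (P(θ) r + Q(θ) rⁿ)`, as a time-dependent vector
field on the line. -/
def radialField (P Q : ℝ → ℝ) (n : ℕ) (θ r : ℝ) : ℝ :=
  r * (P θ * r + Q θ * r ^ n)

theorem isSuperlinearField_radialField {P Q : ℝ → ℝ} (hP : Continuous P) (hQ : Continuous Q)
    {n : ℕ} (hn : n ≠ 0) (a b : ℝ) : IsSuperlinearField (radialField P Q n) (Icc a b) where
  continuousOn x := by unfold radialField; fun_prop
  lipschitzOnBalls := by
    refine lipschitzOnBalls_of_hasDerivAt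
      (F' := fun θ r ↦ 2 * P θ * r + (n + 1) * Q θ * r ^ n) isCompact_Icc (fun θ r ↦ ?_)
      (by fun_prop)
    have hsq := (hasDerivAt_pow 2 r).const_mul (P θ)
    have hpow := (hasDerivAt_pow (n + 1) r).const_mul (Q θ)
    have radialField_eq :
        radialField P Q n θ = (fun r ↦ P θ * r ^ 2) + fun r ↦ Q θ * r ^ (n + 1) := by
      ext r
      simp only [radialField, Pi.add_apply]
      ring
    rw [radialField_eq]
    exact (hsq.add hpow).congr_deriv (by push_cast; ring)
  isLittleO := by
    have bounded {R : ℝ → ℝ} (hR : Continuous R) :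
        (fun p : ℝ × ℝ ↦ R p.1) =O[𝓟 (Icc a b) ×ˢ 𝓝 0] fun _ ↦ (1 : ℝ) :=
      (hR.continuousOn.isBigO_principal isCompact_Icc (by simp)).comp_tendsto tendsto_fst
    have tendsto_r : Tendsto Prod.snd (𝓟 (Icc a b) ×ˢ 𝓝 (0 : ℝ)) (𝓝 0) := tendsto_snd
    have tendsto_pow : Tendsto (fun p : ℝ × ℝ ↦ p.2 ^ n) (𝓟 (Icc a b) ×ˢ 𝓝 0) (𝓝 0) := by
      simpa [hn] using tendsto_r.pow n
    have hsmall := ((bounded hP).mul_isLittleO (isLittleO_one_iff ℝ |>.2 tendsto_r)).add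
      ((bounded hQ).mul_isLittleO (isLittleO_one_iff ℝ |>.2 tendsto_pow))
    simpa [radialField] using (isBigO_refl Prod.snd _).mul_isLittleO hsmall

theorem X_pow_dvd_of_isBigO {𝕜 : Type*} [NontriviallyNormedField 𝕜] {n : ℕ} {p : 𝕜[X]}
    (hp : (fun x ↦ p.eval x) =O[𝓝[≠] 0] fun x ↦ x ^ n) : X ^ n ∣ p := by
  induction n generalizing p with
  | zero => simp
  | succ n ih =>
    have tendsto_pow : Tendsto (fun x : 𝕜 ↦ x ^ (n + 1)) (𝓝[≠] 0) (𝓝 0) := by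
      simpa using ((continuous_pow (n + 1)).tendsto (0 : 𝕜)).mono_left nhdsWithin_le_nhds
    have eval_zero : p.eval 0 = 0 :=
      tendsto_nhds_unique (p.continuous.continuousWithinAt.tendsto) (hp.trans_tendsto tendsto_pow)
    obtain ⟨q, rfl⟩ : X ∣ p := by rwa [X_dvd_iff, coeff_zero_eq_eval_zero]
    rw [pow_succ']
    refine mul_dvd_mul_left X (ih ?_)
    refine ((isBigO_refl (fun x : 𝕜 ↦ x⁻¹) (𝓝[≠] 0)).mul hp).congr' ?_ ?_ <;>
      filter_upwards [self_mem_nhdsWithin] with x (hx : x ≠ 0)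
    · simp [hx]
    · rw [pow_succ, mul_comm, mul_inv_cancel_right₀ hx]

theorem inv_one_sub_pow_sub_sum_isBigO (n N : ℕ) :
    (fun y : ℝ ↦ ((1 - y) ^ (n + 1))⁻¹ - ∑ k ∈ Finset.range N, ((n + k).choose n : ℝ) * y ^ k)
      =O[𝓝 0] fun y ↦ y ^ N := by
  have hseries := (Real.one_div_sub_pow_hasFPowerSeriesOnBall_zero n
    one_ne_zero).hasFPowerSeriesAt.isBigO_sub_partialSum_pow N
  refine (hseries.congr_left fun y ↦ ?_).trans (.of_bound 1 (.of_forall fun y ↦ by simp))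
  simp [FormalMultilinearSeries.partialSum, mul_comm]

theorem isBigO_sub_of_hasDerivWithinAt {ι E : Type*} [NormedAddCommGroup E] [NormedSpace ℝ E]
    {l : Filter ι} {f f' : ι → ℝ → E} {g : ι → ℝ} {a b : ℝ}
    (hf : ∀ᶠ i in l, ∀ t ∈ Icc a b, HasDerivWithinAt (f i) (f' i t) (Icc a b) t)
    (hf' : (fun p : ι × ℝ ↦ f' p.1 p.2) =O[l ×ˢ 𝓟 (Icc a b)] fun p ↦ g p.1) :
    (fun p : ι × ℝ ↦ f p.1 p.2 - f p.1 a) =O[l ×ˢ 𝓟 (Icc a b)] fun p ↦ g p.1 := by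
  obtain ⟨C, hC⟩ := hf'.bound
  refine .of_bound (C * (b - a)) (eventually_prod_principal_iff.2 ?_)
  filter_upwards [hf, eventually_prod_principal_iff.1 hC] with i hi hCi t ht
  have hle : a ≤ b := ht.1.trans ht.2
  have ha : a ∈ Icc a b := left_mem_Icc.2 hle
  calc ‖f i t - f i a‖
      ≤ C * ‖g i‖ * ‖t - a‖ :=
        (convex_Icc a b).norm_image_sub_le_of_norm_hasDerivWithin_le hi hCi ha ht
    _ ≤ C * ‖g i‖ * (b - a) := by
        gcongr
        · exact (norm_nonneg _).trans (hCi a ha)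
        · rw [Real.norm_of_nonneg (sub_nonneg.2 ht.1)]
          linarith [ht.2]
    _ = C * (b - a) * ‖g i‖ := by ring

theorem intervalIntegral_isBigO {ι E : Type*} [NormedAddCommGroup E] [NormedSpace ℝ E]
    {l : Filter ι} {f : ι → ℝ → E} {g : ι → ℝ} {a b : ℝ} (hab : a ≤ b)
    (hf : (fun p : ι × ℝ ↦ f p.1 p.2) =O[l ×ˢ 𝓟 (Icc a b)] fun p ↦ g p.1) :
    (fun i ↦ ∫ t in a..b, f i t) =O[l] g := by
  have hswap : (fun p : ℝ × ι ↦ f p.2 p.1) =O[𝓟 (Icc a b) ×ˢ l] (g ∘ Prod.snd) :=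
    hf.comp_tendsto tendsto_prod_swap
  refine (hswap.set_integral_isBigO (μ := volume) measure_Icc_lt_top).congr_left fun i ↦ ?_
  rw [intervalIntegral.integral_of_le hab, integral_Icc_eq_integral_Ioc]

/-- A family `φ c` of solutions of `x' = F(t, x)` on `[a, b]`, indexed by small initial values
`c ≠ 0`, that return to their initial value at time `b` and are of size `O(c)` uniformly in time. -/
structure IsReturningFamily (F : ℝ → ℝ → ℝ) (a b : ℝ) (φ : ℝ → ℝ → ℝ) : Prop where
  isIntegralCurveOn : ∀ᶠ c in 𝓝[≠] 0, IsIntegralCurveOn (φ c) F (Icc a b)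
  left_eq : ∀ᶠ c in 𝓝[≠] 0, φ c a = c
  right_eq : ∀ᶠ c in 𝓝[≠] 0, φ c b = c
  isBigO : (fun p : ℝ × ℝ ↦ φ p.1 p.2) =O[𝓝[≠] 0 ×ˢ 𝓟 (Icc a b)] Prod.fst

theorem IsReturningFamily.eventually_ne_zero {F φ : ℝ → ℝ → ℝ} {a b : ℝ} (hab : a ≤ b)
    (hF : IsSuperlinearField F (Icc a b)) (hφ : IsReturningFamily F a b φ) :
    ∀ᶠ c in 𝓝[≠] 0, ∀ t ∈ Icc a b, φ c t ≠ 0 := by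
  filter_upwards [hφ.isIntegralCurveOn, hφ.left_eq, self_mem_nhdsWithin] with c hc hca hc0 t ht h
  have hzero := eqOn_Icc_of_isIntegralCurveOn hF.lipschitzOnBalls hc hF.isIntegralCurveOn_zero ht h
  exact hc0 (hca.symm.trans (hzero (left_mem_Icc.2 hab)))

section Moments

variable {P Q A r : ℝ → ℝ} {φ : ℝ → ℝ → ℝ} {n : ℕ} {a b θ : ℝ}

theorem hasDerivWithinAt_inv_add {s : Set ℝ} (hA : HasDerivWithinAt A (P θ) s θ)
    (hr : HasDerivWithinAt r (radialField P Q (n + 1) θ (r θ)) s θ) (h0 : r θ ≠ 0) :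
    HasDerivWithinAt (fun t ↦ (r t)⁻¹ + A t) (-(Q θ * r θ ^ n)) s θ := by
  refine ((hr.inv h0).add hA).congr_deriv ?_
  rw [radialField]
  field_simp
  ring

-- With `v = 1 / r + A` the integrand is `Q * (r * v) ^ (n + 1) = -v' * v ^ (n + 1)`.
theorem integral_mul_one_add_pow_eq_zero (hQ : Continuous Q) (hab : a ≤ b)
    (hA : ∀ θ, HasDerivAt A (P θ) θ) (hAab : A a = A b)
    (hr : IsIntegralCurveOn r (radialField P Q (n + 2)) (Icc a b)) (hrab : r a = r b)
    (h0 : ∀ θ ∈ Icc a b, r θ ≠ 0) :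
    ∫ θ in a..b, Q θ * (1 + A θ * r θ) ^ (n + 1) = 0 := by
  set v : ℝ → ℝ := fun t ↦ (r t)⁻¹ + A t
  have hv : ∀ θ ∈ Icc a b, HasDerivWithinAt (fun t ↦ -(v t ^ (n + 2) / (n + 2)))
      (Q θ * (1 + A θ * r θ) ^ (n + 1)) (Icc a b) θ := fun θ hθ ↦ by
    have hpow : HasDerivWithinAt (fun t ↦ v t ^ (n + 2))
        ((n + 2 : ℕ) * v θ ^ (n + 1) * -(Q θ * r θ ^ (n + 1))) (Icc a b) θ :=
      (hasDerivWithinAt_inv_add (hA θ).hasDerivWithinAt (hr θ hθ) (h0 θ hθ)).pow (n + 2)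
    have hrv : 1 + A θ * r θ = r θ * v θ := by
      simp only [v, mul_add, mul_inv_cancel₀ (h0 θ hθ), mul_comm]
    refine (hpow.div_const (n + 2 : ℝ)).neg.congr_deriv ?_
    rw [hrv, mul_pow]
    push_cast
    field_simp
  have hcont : ContinuousOn (fun θ ↦ Q θ * (1 + A θ * r θ) ^ (n + 1)) (Icc a b) := by
    have hAc : Continuous A := continuous_iff_continuousAt.2 fun θ ↦ (hA θ).continuousAt
    have hrc := hr.continuousOn
    fun_prop
  rw [intervalIntegral.integral_eq_sub_of_hasDerivAt_of_le hab
    (fun θ hθ ↦ (hv θ hθ).continuousWithinAt)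
    (fun θ hθ ↦ (hv θ (Ioo_subset_Icc_self hθ)).hasDerivAt (Icc_mem_nhds hθ.1 hθ.2))
    (hcont.intervalIntegrable_of_Icc hab)]
  simp only [v, hAab, hrab, sub_self]

-- Integrating `(1 / φ + A)' = -Q * φ ^ (n + 1)` gives `1 / φ + A = 1 / c + O(c ^ (n + 1))`.
theorem IsReturningFamily.mul_one_sub_isBigO (hP : Continuous P) (hQ : Continuous Q)
    (hab : a ≤ b) (hA : ∀ θ, HasDerivAt A (P θ) θ) (hAa : A a = 0)
    (hφ : IsReturningFamily (radialField P Q (n + 2)) a b φ) :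
    (fun p : ℝ × ℝ ↦ φ p.1 p.2 * (1 - A p.2 * p.1) - p.1)
      =O[𝓝[≠] 0 ×ˢ 𝓟 (Icc a b)] fun p ↦ p.1 ^ (n + 3) := by
  have hne := hφ.eventually_ne_zero hab
    (isSuperlinearField_radialField hP hQ (n + 1).succ_ne_zero a b)
  have hQ1 : (fun p : ℝ × ℝ ↦ Q p.2) =O[𝓝[≠] 0 ×ˢ 𝓟 (Icc a b)] fun _ ↦ (1 : ℝ) :=
    (hQ.continuousOn.isBigO_principal isCompact_Icc (by simp)).comp_tendsto tendsto_snd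
  have hv := isBigO_sub_of_hasDerivWithinAt (l := 𝓝[≠] 0) (f := fun c θ ↦ (φ c θ)⁻¹ + A θ)
    (f' := fun c θ ↦ -(Q θ * φ c θ ^ (n + 1))) (g := fun c ↦ c ^ (n + 1)) (a := a) (b := b)
    (by
      filter_upwards [hne, hφ.isIntegralCurveOn] with c hc0 hc θ hθ
      exact hasDerivWithinAt_inv_add (hA θ).hasDerivWithinAt (hc θ hθ) (hc0 θ hθ))
    (by simpa using hQ1.mul (hφ.isBigO.pow (n + 1)))
  refine ((hφ.isBigO.mul (isBigO_refl Prod.fst _)).mul hv).neg_left.congr' ?_ ?_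
  · refine eventually_prod_principal_iff.2 ?_
    filter_upwards [hne, hφ.left_eq, self_mem_nhdsWithin] with c hc0 hca (hc : c ≠ 0) θ hθ
    have hφ0 : φ c θ ≠ 0 := hc0 θ hθ
    rw [hca, hAa]
    field_simp
    ring
  · exact .of_forall fun p ↦ by ring

theorem IsReturningFamily.one_add_pow_sub_sum_isBigO (hP : Continuous P) (hQ : Continuous Q)
    (hab : a ≤ b) (hA : ∀ θ, HasDerivAt A (P θ) θ) (hAa : A a = 0)
    (hφ : IsReturningFamily (radialField P Q (n + 2)) a b φ) :
    (fun p : ℝ × ℝ ↦ (1 + A p.2 * φ p.1 p.2) ^ (n + 1) -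
        ∑ k ∈ Finset.range (n + 3), ((n + k).choose n : ℝ) * (A p.2 * p.1) ^ k)
      =O[𝓝[≠] 0 ×ˢ 𝓟 (Icc a b)] fun p ↦ p.1 ^ (n + 3) := by
  set ℓ : Filter (ℝ × ℝ) := 𝓝[≠] 0 ×ˢ 𝓟 (Icc a b)
  have hAcont : Continuous A := continuous_iff_continuousAt.2 fun θ ↦ (hA θ).continuousAt
  have hA1 : (fun p : ℝ × ℝ ↦ A p.2) =O[ℓ] fun _ ↦ (1 : ℝ) :=
    (hAcont.continuousOn.isBigO_principal isCompact_Icc (by simp)).comp_tendsto tendsto_snd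
  have hAc : (fun p : ℝ × ℝ ↦ A p.2 * p.1) =O[ℓ] Prod.fst := by
    simpa using hA1.mul (isBigO_refl Prod.fst ℓ)
  have hAφ : (fun p : ℝ × ℝ ↦ A p.2 * φ p.1 p.2) =O[ℓ] Prod.fst := by
    simpa using hA1.mul hφ.isBigO
  have tendsto_c : Tendsto Prod.fst ℓ (𝓝 (0 : ℝ)) := (tendsto_nhdsWithin_iff.1 tendsto_fst).1
  have tendsto_one_sub : Tendsto (fun p : ℝ × ℝ ↦ 1 - A p.2 * p.1) ℓ (𝓝 1) := by
    simpa using (hAc.trans_tendsto tendsto_c).const_sub 1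
  have tendsto_inv : Tendsto (fun p : ℝ × ℝ ↦ (1 - A p.2 * p.1)⁻¹) ℓ (𝓝 1) := by
    simpa using tendsto_one_sub.inv₀ one_ne_zero
  have tendsto_one_add : Tendsto (fun p : ℝ × ℝ ↦ 1 + A p.2 * φ p.1 p.2) ℓ (𝓝 1) := by
    simpa using (hAφ.trans_tendsto tendsto_c).const_add 1
  have hbase : (fun p : ℝ × ℝ ↦ 1 + A p.2 * φ p.1 p.2 - (1 - A p.2 * p.1)⁻¹)
      =O[ℓ] fun p ↦ p.1 ^ (n + 3) := by
    refine ((hA1.mul (hφ.mul_one_sub_isBigO hP hQ hab hA hAa)).mul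
      (tendsto_inv.isBigO_one ℝ)).congr' ?_ (.of_forall fun p ↦ by ring)
    filter_upwards [tendsto_one_sub.eventually_ne one_ne_zero] with p hp
    field_simp
    ring
  have hpow := ((hasStrictDerivAt_pow (n + 1) (1 : ℝ)).hasStrictFDerivAt.isBigO_sub.comp_tendsto
    (tendsto_one_add.prodMk_nhds tendsto_inv)).trans hbase
  have htaylor := ((inv_one_sub_pow_sub_sum_isBigO n (n + 3)).comp_tendsto
    (hAc.trans_tendsto tendsto_c)).trans (hAc.pow (n + 3))
  exact (hpow.add htaylor).congr_left fun p ↦ by simp [inv_pow]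

theorem IsReturningFamily.integral_mul_sum_isBigO (hP : Continuous P) (hQ : Continuous Q)
    (hab : a ≤ b) (hA : ∀ θ, HasDerivAt A (P θ) θ) (hAa : A a = 0) (hAb : A b = 0)
    (hφ : IsReturningFamily (radialField P Q (n + 2)) a b φ) :
    (fun c ↦ ∫ θ in a..b,
        Q θ * ∑ k ∈ Finset.range (n + 3), ((n + k).choose n : ℝ) * (A θ * c) ^ k)
      =O[𝓝[≠] 0] fun c ↦ c ^ (n + 3) := by
  have hAcont : Continuous A := continuous_iff_continuousAt.2 fun θ ↦ (hA θ).continuousAt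
  have hQ1 : (fun p : ℝ × ℝ ↦ Q p.2) =O[𝓝[≠] 0 ×ˢ 𝓟 (Icc a b)] fun _ ↦ (1 : ℝ) :=
    (hQ.continuousOn.isBigO_principal isCompact_Icc (by simp)).comp_tendsto tendsto_snd
  have hmul := (hQ1.mul (hφ.one_add_pow_sub_sum_isBigO hP hQ hab hA hAa)).congr_right
    fun p ↦ one_mul _
  have hfield := isSuperlinearField_radialField hP hQ (n + 1).succ_ne_zero a b
  refine (intervalIntegral_isBigO (f := fun c θ ↦ Q θ * ((1 + A θ * φ c θ) ^ (n + 1) -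
    ∑ k ∈ Finset.range (n + 3), ((n + k).choose n : ℝ) * (A θ * c) ^ k))
    (g := fun c ↦ c ^ (n + 3)) hab hmul).neg_left.congr' ?_ .rfl
  filter_upwards [hφ.isIntegralCurveOn, hφ.left_eq, hφ.right_eq, hφ.eventually_ne_zero hab hfield]
    with c hc hca hcb hc0
  have hφcont := hc.continuousOn
  simp only [mul_sub]
  rw [intervalIntegral.integral_sub, integral_mul_one_add_pow_eq_zero hQ hab hA
    (hAa.trans hAb.symm) hc (hca.trans hcb.symm) hc0, zero_sub, neg_neg]
  · exact ContinuousOn.intervalIntegrable_of_Icc hab (by fun_prop)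
  · exact Continuous.intervalIntegrable (by fun_prop) a b

theorem IsReturningFamily.integral_mul_pow_eq_zero (hP : Continuous P) (hQ : Continuous Q)
    (hab : a ≤ b) (hA : ∀ θ, HasDerivAt A (P θ) θ) (hAa : A a = 0) (hAb : A b = 0)
    (hφ : IsReturningFamily (radialField P Q (n + 2)) a b φ) {k : ℕ} (hk : k < n + 3) :
    ∫ θ in a..b, Q θ * A θ ^ k = 0 := by
  have hAcont : Continuous A := continuous_iff_continuousAt.2 fun θ ↦ (hA θ).continuousAt
  set p : ℝ[X] := ∑ k ∈ Finset.range (n + 3),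
    C ((n + k).choose n * ∫ θ in a..b, Q θ * A θ ^ k) * X ^ k
  have hp : (fun c ↦ p.eval c) =O[𝓝[≠] 0] fun c ↦ c ^ (n + 3) := by
    refine (hφ.integral_mul_sum_isBigO hP hQ hab hA hAa hAb).congr_left fun c ↦ ?_
    simp only [p, Finset.mul_sum, eval_finsetSum, eval_mul, eval_C, eval_pow, eval_X]
    rw [intervalIntegral.integral_finsetSum fun k _ ↦
      Continuous.intervalIntegrable (by fun_prop) a b]
    refine Finset.sum_congr rfl fun k _ ↦ ?_
    rw [← intervalIntegral.integral_const_mul, ← intervalIntegral.integral_mul_const]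
    exact intervalIntegral.integral_congr fun θ _ ↦ by ring
  have hcoeff : p.coeff k = (n + k).choose n * ∫ θ in a..b, Q θ * A θ ^ k := by
    simp only [p, finsetSum_coeff, coeff_C_mul_X_pow, Finset.sum_ite_eq, Finset.mem_range, hk,
      if_true]
  have hchoose : ((n + k).choose n : ℝ) ≠ 0 :=
    Nat.cast_ne_zero.2 (Nat.choose_pos (Nat.le_add_right n k)).ne'
  have hzero := X_pow_dvd_iff.1 (X_pow_dvd_of_isBigO hp) k hk
  exact (mul_eq_zero.1 (hcoeff.symm.trans hzero)).resolve_left hchoose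

end Moments

theorem HasCenterAtZero.exists_isReturningFamily {F : ℝ → ℝ → ℝ}
    (hF : IsSuperlinearField F (Icc (-1) (2 * π + 1))) (hcenter : HasCenterAtZero F) :
    ∃ φ : ℝ → ℝ → ℝ, IsReturningFamily F 0 (2 * π) φ := by
  obtain ⟨ε, hε, hclose⟩ := hcenter
  have hπ := Real.two_pi_pos
  obtain ⟨φ, hφ, hO⟩ := hF.exists_flow (t₀ := 0) ⟨by norm_num, by linarith⟩
  have hsub : Icc 0 (2 * π) ⊆ Icc (-1) (2 * π + 1) := Icc_subset_Icc (by norm_num) (by norm_num)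
  have hle : 𝓝[≠] (0 : ℝ) ≤ 𝓝 0 := nhdsWithin_le_nhds
  refine ⟨φ, (hφ.filter_mono hle).mono fun c hc ↦ hc.2.mono hsub,
    (hφ.filter_mono hle).mono fun c hc ↦ hc.1, ?_, hO.mono (prod_mono hle (principal_mono.2 hsub))⟩
  filter_upwards [hφ.filter_mono hle, hle (ball_mem_nhds 0 hε)] with c hc hcε
  have hreturn : φ c (2 * π) = φ c 0 := by
    refine hclose (φ c) (by simpa [hc.1] using hcε) fun θ hθ ↦ ?_
    exact (hc.2 θ (hsub hθ)).hasDerivAt (Icc_mem_nhds (by linarith [hθ.1]) (by linarith [hθ.2]))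
  exact hreturn.trans hc.1

theorem hasCenterAtZero_radialField_of_composition {P S g : ℝ → ℝ} (hP : Continuous P)
    (hg : Continuous g) (hS : ∀ θ, HasDerivAt S (P θ) θ) (hSper : S (2 * π) = S 0) {n : ℕ}
    (hn : n ≠ 0) : HasCenterAtZero (radialField P (fun θ ↦ P θ * g (S θ)) n) := by
  have hScont : Continuous S := continuous_iff_continuousAt.2 fun θ ↦ (hS θ).continuousAt
  have h0 : (0 : ℝ) ∈ Icc 0 (2 * π) := left_mem_Icc.2 Real.two_pi_pos.le
  obtain ⟨u, v, huv⟩ : ∃ u v, S '' Icc 0 (2 * π) ⊆ Icc u v :=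
    ⟨_, _, (isCompact_Icc.image hScont).isBounded.subset_Icc_sInf_sSup⟩
  obtain ⟨ψ, hψ, -⟩ := (isSuperlinearField_radialField (P := fun _ ↦ 1) continuous_const hg hn
    u v).exists_flow (huv (mem_image_of_mem S h0))
  obtain ⟨ε, hε, hψε⟩ := Metric.eventually_nhds_iff_ball.1 hψ
  refine ⟨ε, hε, fun r hr0 hr ↦ ?_⟩
  obtain ⟨hψ0, hψsol⟩ := hψε (r 0) (by simpa using hr0)
  have hcomp : IsIntegralCurveOn (fun θ ↦ ψ (r 0) (S θ))
      (radialField P (fun θ ↦ P θ * g (S θ)) n) (Icc 0 (2 * π)) := fun θ hθ ↦ by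
    refine ((hψsol (S θ) (huv (mem_image_of_mem S hθ))).comp θ (hS θ).hasDerivWithinAt
      fun t ht ↦ huv (mem_image_of_mem S ht)).congr_deriv ?_
    simp only [radialField]
    ring
  have heq := eqOn_Icc_of_isIntegralCurveOn
    (isSuperlinearField_radialField hP (by fun_prop) hn 0 (2 * π)).lipschitzOnBalls
    (fun θ hθ ↦ (hr θ hθ).hasDerivWithinAt) hcomp h0 hψ0.symm
  calc r (2 * π) = ψ (r 0) (S (2 * π)) := heq (right_mem_Icc.2 Real.two_pi_pos.le)
    _ = r 0 := by rw [hSper, hψ0]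

theorem integral_eval_comp_mul_eq_zero {P S : ℝ → ℝ} (hP : Continuous P)
    (hS : ∀ θ, HasDerivAt S (P θ) θ) {a b : ℝ} (hSab : S a = S b) (p : ℝ[X]) :
    ∫ θ in a..b, p.eval (S θ) * P θ = 0 := by
  rw [← intervalIntegral.integral_same (a := S a) (f := fun x ↦ p.eval x) (μ := volume)]
  nth_rewrite 2 [hSab]
  exact intervalIntegral.integral_comp_mul_deriv (g := fun x ↦ p.eval x) (fun θ _ ↦ hS θ)
    hP.continuousOn p.continuous

theorem integral_mul_eval_eq_zero {Q A : ℝ → ℝ} (hQ : Continuous Q) (hA : Continuous A) {a b : ℝ}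
    {N : ℕ} (hmoments : ∀ k < N, ∫ θ in a..b, Q θ * A θ ^ k = 0) {p : ℝ[X]}
    (hp : p.natDegree < N) : ∫ θ in a..b, Q θ * p.eval (A θ) = 0 := by
  simp only [eval_eq_sum_range' hp, Finset.mul_sum]
  rw [intervalIntegral.integral_finsetSum fun k _ ↦
    Continuous.intervalIntegrable (by fun_prop) a b]
  refine Finset.sum_eq_zero fun k hk ↦ ?_
  rw [← mul_zero (p.coeff k), ← hmoments k (Finset.mem_range.1 hk),
    ← intervalIntegral.integral_const_mul]
  exact intervalIntegral.integral_congr fun θ _ ↦ mul_left_comm _ _ _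

theorem eq_zero_of_integral_eval_comp_sq_eq_zero {S : ℝ → ℝ} (hS : Continuous S) {a b : ℝ}
    (hSab : ∃ θ ∈ Icc a b, S θ ≠ S a) {p : ℝ[X]}
    (hp : ∫ θ in a..b, p.eval (S θ) ^ 2 = 0) : p = 0 := by
  obtain ⟨θ₁, hθ₁, hne⟩ := hSab
  have hlt : a < b := (hθ₁.1.lt_of_ne fun h ↦ hne (h ▸ rfl)).trans_le hθ₁.2
  have hroot : ∀ θ ∈ Icc a b, p.IsRoot (S θ) := by
    by_contra! hpos
    obtain ⟨θ, hθ, hθ0⟩ := hpos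
    exact (intervalIntegral.integral_pos (f := fun t ↦ p.eval (S t) ^ 2) hlt (by fun_prop)
      (fun t _ ↦ sq_nonneg _) ⟨θ, hθ, sq_pos_of_ne_zero hθ0⟩).ne' hp
  refine p.eq_zero_of_infinite_isRoot ((Set.Icc_infinite (min_lt_max.2 hne)).mono fun s hs ↦ ?_)
  obtain ⟨θ, hθ, rfl⟩ := intermediate_value_uIcc hS.continuousOn hs
  exact hroot θ (uIcc_subset_Icc hθ₁ (left_mem_Icc.2 hlt.le) hθ)

-- Pairing `E (S)` with `Q = E (S) + S' * G (S)` kills the exact form `(G * E) (S) dS`.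
theorem eq_zero_of_hasCenterAtZero_radialField {P S : ℝ → ℝ} (hP : Continuous P)
    (hS : ∀ θ, HasDerivAt S (P θ) θ) (hSper : S (2 * π) = S 0)
    (hSne : ∃ θ ∈ Icc 0 (2 * π), S θ ≠ S 0) {n : ℕ} {E G : ℝ[X]} (hE : E.natDegree ≤ n + 2)
    (hcenter : HasCenterAtZero
      (radialField P (fun θ ↦ E.eval (S θ) + P θ * G.eval (S θ)) (n + 2))) : E = 0 := by
  have hScont : Continuous S := continuous_iff_continuousAt.2 fun θ ↦ (hS θ).continuousAt
  set Q : ℝ → ℝ := fun θ ↦ E.eval (S θ) + P θ * G.eval (S θ)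
  have hQ : Continuous Q := by fun_prop
  obtain ⟨φ, hφ⟩ := hcenter.exists_isReturningFamily
    (isSuperlinearField_radialField hP hQ (n + 1).succ_ne_zero _ _)
  have hmoments : ∀ k < n + 3, ∫ θ in 0..2 * π, Q θ * (S θ - S 0) ^ k = 0 := fun k hk ↦
    hφ.integral_mul_pow_eq_zero hP hQ Real.two_pi_pos.le (fun θ ↦ (hS θ).sub_const (S 0))
      (sub_self _) (sub_eq_zero.2 hSper) hk
  have hQE : ∫ θ in 0..2 * π, Q θ * E.eval (S θ) = 0 := by
    have hdeg : (E.comp (X + C (S 0))).natDegree < n + 3 := by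
      rw [natDegree_comp, natDegree_X_add_C, mul_one]
      exact Nat.lt_succ_of_le hE
    simpa using integral_mul_eval_eq_zero hQ (by fun_prop) hmoments hdeg
  have hGE : ∫ θ in 0..2 * π, (G * E).eval (S θ) * P θ = 0 :=
    integral_eval_comp_mul_eq_zero hP hS hSper.symm (G * E)
  refine eq_zero_of_integral_eval_comp_sq_eq_zero hScont hSne ?_
  calc ∫ θ in 0..2 * π, E.eval (S θ) ^ 2
      = ∫ θ in 0..2 * π, (Q θ * E.eval (S θ) - (G * E).eval (S θ) * P θ) :=
        intervalIntegral.integral_congr fun θ _ ↦ by simp only [Q, eval_mul]; ring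
    _ = 0 := by
        rw [intervalIntegral.integral_sub (Continuous.intervalIntegrable (by fun_prop) _ _)
          (Continuous.intervalIntegrable (by fun_prop) _ _), hQE, hGE, sub_zero]

theorem hasCenterAtZero_radialField_iff {P S : ℝ → ℝ} (hP : Continuous P)
    (hS : ∀ θ, HasDerivAt S (P θ) θ) (hSper : S (2 * π) = S 0)
    (hSne : ∃ θ ∈ Icc 0 (2 * π), S θ ≠ S 0) {n : ℕ} {E G : ℝ[X]} (hE : E.natDegree ≤ n + 2) :
    HasCenterAtZero (radialField P (fun θ ↦ E.eval (S θ) + P θ * G.eval (S θ)) (n + 2)) ↔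
      E = 0 := by
  refine ⟨eq_zero_of_hasCenterAtZero_radialField hP hS hSper hSne hE, ?_⟩
  rintro rfl
  simpa using hasCenterAtZero_radialField_of_composition hP G.continuous hS hSper
    (n + 1).succ_ne_zero

/-- A homogeneous real polynomial of degree six in two variables; `cᵢⱼ` is the coefficient of
`xⁱ yʲ`. -/
structure BinarySextic where
  (c60 c51 c42 c33 c24 c15 c06 : ℝ)

namespace BinarySextic

/-- The value of a binary sextic at the point `(x, y)`. -/
def eval (p : BinarySextic) (x y : ℝ) : ℝ :=
  p.c60 * x ^ 6 + p.c51 * x ^ 5 * y + p.c42 * x ^ 4 * y ^ 2 + p.c33 * x ^ 3 * y ^ 3 +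
    p.c24 * x ^ 2 * y ^ 4 + p.c15 * x * y ^ 5 + p.c06 * y ^ 6

/-- The sextic `(u, v) ↦ p (a u - b v, b u + a v)`, that is, `p` in the coordinates obtained from
a rotation combined with a scaling by `√(a ^ 2 + b ^ 2)`; see `eval_rotate`. -/
def rotate (p : BinarySextic) (a b : ℝ) : BinarySextic where
  c60 := p.c60 * a ^ 6 + p.c51 * (a ^ 5 * b) + p.c42 * (a ^ 4 * b ^ 2) + p.c33 * (a ^ 3 * b ^ 3) +
    p.c24 * (a ^ 2 * b ^ 4) + p.c15 * (a * b ^ 5) + p.c06 * b ^ 6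
  c51 := p.c60 * (-6 * a ^ 5 * b) + p.c51 * (a ^ 6 - 5 * a ^ 4 * b ^ 2) +
    p.c42 * (2 * a ^ 5 * b - 4 * a ^ 3 * b ^ 3) + p.c33 * (3 * a ^ 4 * b ^ 2 - 3 * a ^ 2 * b ^ 4) +
    p.c24 * (4 * a ^ 3 * b ^ 3 - 2 * a * b ^ 5) + p.c15 * (5 * a ^ 2 * b ^ 4 - b ^ 6) +
    p.c06 * (6 * a * b ^ 5)
  c42 := p.c60 * (15 * a ^ 4 * b ^ 2) + p.c51 * (-5 * a ^ 5 * b + 10 * a ^ 3 * b ^ 3) +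
    p.c42 * (a ^ 6 - 8 * a ^ 4 * b ^ 2 + 6 * a ^ 2 * b ^ 4) +
    p.c33 * (3 * a ^ 5 * b - 9 * a ^ 3 * b ^ 3 + 3 * a * b ^ 5) +
    p.c24 * (6 * a ^ 4 * b ^ 2 - 8 * a ^ 2 * b ^ 4 + b ^ 6) +
    p.c15 * (10 * a ^ 3 * b ^ 3 - 5 * a * b ^ 5) + p.c06 * (15 * a ^ 2 * b ^ 4)
  c33 := p.c60 * (-20 * a ^ 3 * b ^ 3) + p.c51 * (10 * a ^ 4 * b ^ 2 - 10 * a ^ 2 * b ^ 4) +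
    p.c42 * (-4 * a ^ 5 * b + 12 * a ^ 3 * b ^ 3 - 4 * a * b ^ 5) +
    p.c33 * (a ^ 6 - 9 * a ^ 4 * b ^ 2 + 9 * a ^ 2 * b ^ 4 - b ^ 6) +
    p.c24 * (4 * a ^ 5 * b - 12 * a ^ 3 * b ^ 3 + 4 * a * b ^ 5) +
    p.c15 * (10 * a ^ 4 * b ^ 2 - 10 * a ^ 2 * b ^ 4) + p.c06 * (20 * a ^ 3 * b ^ 3)
  c24 := p.c60 * (15 * a ^ 2 * b ^ 4) + p.c51 * (-10 * a ^ 3 * b ^ 3 + 5 * a * b ^ 5) +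
    p.c42 * (6 * a ^ 4 * b ^ 2 - 8 * a ^ 2 * b ^ 4 + b ^ 6) +
    p.c33 * (-3 * a ^ 5 * b + 9 * a ^ 3 * b ^ 3 - 3 * a * b ^ 5) +
    p.c24 * (a ^ 6 - 8 * a ^ 4 * b ^ 2 + 6 * a ^ 2 * b ^ 4) +
    p.c15 * (5 * a ^ 5 * b - 10 * a ^ 3 * b ^ 3) + p.c06 * (15 * a ^ 4 * b ^ 2)
  c15 := p.c60 * (-6 * a * b ^ 5) + p.c51 * (5 * a ^ 2 * b ^ 4 - b ^ 6) +
    p.c42 * (-4 * a ^ 3 * b ^ 3 + 2 * a * b ^ 5) + p.c33 * (3 * a ^ 4 * b ^ 2 - 3 * a ^ 2 * b ^ 4) +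
    p.c24 * (-2 * a ^ 5 * b + 4 * a ^ 3 * b ^ 3) + p.c15 * (a ^ 6 - 5 * a ^ 4 * b ^ 2) +
    p.c06 * (6 * a ^ 5 * b)
  c06 := p.c60 * b ^ 6 - p.c51 * (a * b ^ 5) + p.c42 * (a ^ 2 * b ^ 4) - p.c33 * (a ^ 3 * b ^ 3) +
    p.c24 * (a ^ 4 * b ^ 2) - p.c15 * (a ^ 5 * b) + p.c06 * a ^ 6

/-- The polynomial that `q (u, v)`, restricted to the circle `u ^ 2 + v ^ 2 = ρ` and averaged over
the reflection `u ↦ -u`, is in `v`. -/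
noncomputable def evenPart (q : BinarySextic) (ρ : ℝ) : ℝ[X] :=
  C q.c60 * (C ρ - X ^ 2) ^ 3 + C q.c42 * (C ρ - X ^ 2) ^ 2 * X ^ 2 +
    C q.c24 * (C ρ - X ^ 2) * X ^ 4 + C q.c06 * X ^ 6

/-- The polynomial in `v` whose product with `u` is the part of `q (u, v)` on the circle
`u ^ 2 + v ^ 2 = ρ` that is odd in `u`. -/
noncomputable def oddPart (q : BinarySextic) (ρ : ℝ) : ℝ[X] :=
  C q.c51 * (C ρ - X ^ 2) ^ 2 * X + C q.c33 * (C ρ - X ^ 2) * X ^ 3 + C q.c15 * X ^ 5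

variable (p q : BinarySextic) {a b ρ : ℝ}

theorem eval_mul_mul (t x y : ℝ) : p.eval (t * x) (t * y) = t ^ 6 * p.eval x y := by
  simp only [eval]
  ring

theorem eval_rotate (a b u v : ℝ) :
    (p.rotate a b).eval u v = p.eval (a * u - b * v) (b * u + a * v) := by
  simp only [eval, rotate]
  ring

theorem eval_eq_evenPart_add_oddPart {u v : ℝ} (huv : u ^ 2 + v ^ 2 = ρ) :
    q.eval u v = (q.evenPart ρ).eval v + u * (q.oddPart ρ).eval v := by
  subst huv
  simp only [eval, evenPart, oddPart, eval_add, eval_sub, eval_mul, eval_pow, eval_C, eval_X]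
  ring

theorem natDegree_evenPart_le (ρ : ℝ) : (q.evenPart ρ).natDegree ≤ 6 := by
  rw [evenPart]
  compute_degree

theorem evenPart_eq_zero_iff (hρ : ρ ≠ 0) :
    q.evenPart ρ = 0 ↔ q.c60 = 0 ∧ q.c42 = 0 ∧ q.c24 = 0 ∧ q.c06 = 0 := by
  refine ⟨fun h ↦ ?_, fun ⟨h60, h42, h24, h06⟩ ↦ by simp [evenPart, h60, h42, h24, h06]⟩
  have hexpand : q.evenPart ρ = C (ρ ^ 3 * q.c60) + C (ρ ^ 2 * (q.c42 - 3 * q.c60)) * X ^ 2 +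
      C (ρ * (q.c24 - 2 * q.c42 + 3 * q.c60)) * X ^ 4 +
      C (q.c06 - q.c24 + q.c42 - q.c60) * X ^ 6 := by
    simp only [evenPart, map_add, map_sub, map_mul, map_pow, map_ofNat]
    ring
  have hcoeff (k : ℕ) : (q.evenPart ρ).coeff k = 0 := by rw [h, coeff_zero]
  simp only [hexpand, coeff_add, coeff_C_mul, coeff_X_pow, coeff_C] at hcoeff
  have h60 : q.c60 = 0 := by simpa [hρ] using hcoeff 0
  have h42 : q.c42 - 3 * q.c60 = 0 := by simpa [hρ] using hcoeff 2
  have h24 : q.c24 - 2 * q.c42 + 3 * q.c60 = 0 := by simpa [hρ] using hcoeff 4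
  have h06 : q.c06 - q.c24 + q.c42 - q.c60 = 0 := by simpa using hcoeff 6
  refine ⟨h60, ?_, ?_, ?_⟩ <;> linarith

-- Up to powers of `ρ` and multiples of the first condition, the conditions are independent linear
-- forms in the coefficients `c60`, `c42`, `c24`, `c06` of the rotated sextic.
theorem evenPart_rotate_eq_zero_iff (h : a ^ 2 + b ^ 2 ≠ 0) :
    (p.rotate a b).evenPart (a ^ 2 + b ^ 2) = 0 ↔
      5 * (p.c60 + p.c06) + p.c42 + p.c24 = 0 ∧
      a ^ 2 * (p.c24 - 5 * p.c60 + 10 * p.c06) - a * b * (5 * p.c51 + 5 * p.c15 + 3 * p.c33) +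
        b ^ 2 * (p.c42 - 5 * p.c06 + 10 * p.c60) = 0 ∧
      a ^ 4 * (p.c24 - 3 * p.c60 + 12 * p.c06) - a ^ 3 * b * (3 * p.c51 + 7 * p.c15 + 3 * p.c33) -
        12 * a ^ 2 * b ^ 2 * (p.c60 + p.c06) - a * b ^ 3 * (3 * p.c15 + 7 * p.c51 + 3 * p.c33) +
        b ^ 4 * (p.c42 - 3 * p.c06 + 12 * p.c60) = 0 ∧
      p.c60 * b ^ 6 - p.c51 * b ^ 5 * a + p.c42 * b ^ 4 * a ^ 2 - p.c33 * b ^ 3 * a ^ 3 +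
        p.c24 * b ^ 2 * a ^ 4 - p.c15 * b * a ^ 5 + p.c06 * a ^ 6 = 0 := by
  rw [evenPart_eq_zero_iff _ h]
  set ρ := a ^ 2 + b ^ 2
  set q := p.rotate a b
  set f₁ := 5 * (p.c60 + p.c06) + p.c42 + p.c24
  set f₂ := a ^ 2 * (p.c24 - 5 * p.c60 + 10 * p.c06) -
    a * b * (5 * p.c51 + 5 * p.c15 + 3 * p.c33) +
    b ^ 2 * (p.c42 - 5 * p.c06 + 10 * p.c60)
  set f₃ := a ^ 4 * (p.c24 - 3 * p.c60 + 12 * p.c06) -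
    a ^ 3 * b * (3 * p.c51 + 7 * p.c15 + 3 * p.c33) -
    12 * a ^ 2 * b ^ 2 * (p.c60 + p.c06) - a * b ^ 3 * (3 * p.c15 + 7 * p.c51 + 3 * p.c33) +
    b ^ 4 * (p.c42 - 3 * p.c06 + 12 * p.c60)
  set f₄ := p.c60 * b ^ 6 - p.c51 * b ^ 5 * a + p.c42 * b ^ 4 * a ^ 2 - p.c33 * b ^ 3 * a ^ 3 +
    p.c24 * b ^ 2 * a ^ 4 - p.c15 * b * a ^ 5 + p.c06 * a ^ 6
  have h₁ : ρ ^ 3 * f₁ = 5 * q.c60 + 5 * q.c06 + q.c42 + q.c24 := by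
    simp only [ρ, f₁, q, rotate]; ring
  have h₂ : ρ ^ 2 * f₂ = q.c24 - 5 * q.c60 + 10 * q.c06 := by
    simp only [ρ, f₂, q, rotate]; ring
  have h₃ : ρ * (f₃ + 3 * a ^ 2 * b ^ 2 * f₁) = q.c24 - 3 * q.c60 + 12 * q.c06 := by
    simp only [ρ, f₁, f₃, q, rotate]; ring
  have h₄ : f₄ = q.c06 := by simp only [f₄, q, rotate]; ring
  clear_value ρ q f₁ f₂ f₃ f₄
  constructor
  · rintro ⟨h60, h42, h24, h06⟩
    have hf₁ : f₁ = 0 := by simpa [h60, h42, h24, h06, h] using h₁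
    have hf₂ : f₂ = 0 := by simpa [h60, h24, h06, h] using h₂
    have hf₃ : f₃ = 0 := by simpa [h60, h24, h06, hf₁, h] using h₃
    exact ⟨hf₁, hf₂, hf₃, h₄.trans h06⟩
  · rintro ⟨rfl, rfl, rfl, rfl⟩
    simp only [mul_zero, add_zero] at h₁ h₂ h₃
    refine ⟨?_, ?_, ?_, ?_⟩ <;> linarith

end BinarySextic

theorem BinarySextic.hasCenterAtZero_radialField_iff (p : BinarySextic) {a b : ℝ}
    (h : a ^ 2 + b ^ 2 ≠ 0) :
    HasCenterAtZero (radialField (fun θ ↦ a * cos θ + b * sin θ)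
      (fun θ ↦ p.eval (cos θ) (sin θ)) 6) ↔ (p.rotate a b).evenPart (a ^ 2 + b ^ 2) = 0 := by
  set ρ := a ^ 2 + b ^ 2
  set P : ℝ → ℝ := fun θ ↦ a * cos θ + b * sin θ
  set S : ℝ → ℝ := fun θ ↦ a * sin θ - b * cos θ
  set E : ℝ[X] := C (ρ ^ 6)⁻¹ * (p.rotate a b).evenPart ρ
  set G : ℝ[X] := C (ρ ^ 6)⁻¹ * (p.rotate a b).oddPart ρ
  have hS (θ : ℝ) : HasDerivAt S (P θ) θ :=
    (((hasDerivAt_sin θ).const_mul a).sub ((hasDerivAt_cos θ).const_mul b)).congr_deriv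
      (by simp only [P]; ring)
  have hSne : ∃ θ ∈ Icc 0 (2 * π), S θ ≠ S 0 := by
    by_contra! hconst
    have hpi := hconst π ⟨pi_pos.le, by linarith [pi_pos]⟩
    have hpi2 := hconst (π / 2) ⟨by positivity, by linarith [pi_pos]⟩
    simp only [S, sin_pi, cos_pi, sin_pi_div_two, cos_pi_div_two, sin_zero, cos_zero] at hpi hpi2
    obtain rfl : b = 0 := by linarith
    exact h (by simp [ρ, show a = 0 by linarith])
  have hcircle (θ : ℝ) : P θ ^ 2 + S θ ^ 2 = ρ := by
    linear_combination ρ * cos_sq_add_sin_sq θ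
  have hcos (θ : ℝ) : a * P θ - b * S θ = ρ * cos θ := by simp only [P, S, ρ]; ring
  have hsin (θ : ℝ) : b * P θ + a * S θ = ρ * sin θ := by simp only [P, S, ρ]; ring
  have hdecomp :
      (fun θ ↦ p.eval (cos θ) (sin θ)) = fun θ ↦ E.eval (S θ) + P θ * G.eval (S θ) := by
    ext θ
    have heval := (p.rotate a b).eval_eq_evenPart_add_oddPart (hcircle θ)
    rw [eval_rotate, hcos, hsin, eval_mul_mul] at heval
    rw [← mul_right_inj' (pow_ne_zero 6 h), heval]
    simp only [E, G, Polynomial.eval_mul, eval_C]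
    field_simp
  have hE : E.natDegree ≤ 4 + 2 := natDegree_C_mul_le _ _ |>.trans (natDegree_evenPart_le _ ρ)
  rw [hdecomp, _root_.hasCenterAtZero_radialField_iff (by fun_prop) hS (by simp [S]) hSne hE]
  simp [E, h]

/-- Corollary 2.8: center conditions for `dr/dθ = r (P₁ r + P₆ r⁶)`. -/
theorem septic_center_conditions
    (p10 p01 p60 p51 p42 p33 p24 p15 p06 : ℝ) (h : p10 ^ 2 + p01 ^ 2 ≠ 0)
    (P1 P6 : ℝ → ℝ)
    (hP1 : ∀ θ, P1 θ = p10 * Real.cos θ + p01 * Real.sin θ)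
    (hP6 : ∀ θ, P6 θ = p60 * Real.cos θ ^ 6 + p51 * Real.cos θ ^ 5 * Real.sin θ +
      p42 * Real.cos θ ^ 4 * Real.sin θ ^ 2 + p33 * Real.cos θ ^ 3 * Real.sin θ ^ 3 +
      p24 * Real.cos θ ^ 2 * Real.sin θ ^ 4 + p15 * Real.cos θ * Real.sin θ ^ 5 +
      p06 * Real.sin θ ^ 6) :
    HasCenterAtZero (fun θ r => r * (P1 θ * r + P6 θ * r ^ 6)) ↔
      (5 * (p60 + p06) + p42 + p24 = 0 ∧
       p10 ^ 2 * (p24 - 5 * p60 + 10 * p06) - p10 * p01 * (5 * p51 + 5 * p15 + 3 * p33) +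
         p01 ^ 2 * (p42 - 5 * p06 + 10 * p60) = 0 ∧
       p10 ^ 4 * (p24 - 3 * p60 + 12 * p06) - p10 ^ 3 * p01 * (3 * p51 + 7 * p15 + 3 * p33) -
         12 * p10 ^ 2 * p01 ^ 2 * (p60 + p06) - p10 * p01 ^ 3 * (3 * p15 + 7 * p51 + 3 * p33) +
         p01 ^ 4 * (p42 - 3 * p06 + 12 * p60) = 0 ∧
       p60 * p01 ^ 6 - p51 * p01 ^ 5 * p10 + p42 * p01 ^ 4 * p10 ^ 2 -
         p33 * p01 ^ 3 * p10 ^ 3 + p24 * p01 ^ 2 * p10 ^ 4 - p15 * p01 * p10 ^ 5 +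
         p06 * p10 ^ 6 = 0) := by
  let p : BinarySextic := ⟨p60, p51, p42, p33, p24, p15, p06⟩
  obtain rfl : P1 = fun θ ↦ p10 * cos θ + p01 * sin θ := funext hP1
  obtain rfl : P6 = fun θ ↦ p.eval (cos θ) (sin θ) := funext hP6
  exact (p.hasCenterAtZero_radialField_iff h).trans (p.evenPart_rotate_eq_zero_iff h)
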